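/- Let n < m be nonnegative integers. If every L_n-injective R-module is L_m-injective, then every R-module of finite flat dimension has flat dimension at most n (i.e. l.FFD(R) ≤ n); conversely, if l.FFD(R) ≤ n then the classes of L_n-injective and L_m-injective modules coincide. -/

import Mathlib

open CategoryTheory

/-- Flatness of a module over an arbitrary (possibly noncommutative) ring,
via the equational criterion: every relation is a consequence of trivial relations. -/
def IsFlatMod (R : Type) [Ring R] (M : Type) [AddCommGroup M] [Module R M] : Prop :=
  ∀ (ι : Type) (_ : Fintype ι) (r : ι → R) (x : ι → M),
    (∑ i, r i • x i = 0) →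
      ∃ (κ : Type) (_ : Fintype κ) (a : ι → κ → R) (y : κ → M),
        (∀ i, x i = ∑ j, a i j • y j) ∧ ∀ j, (∑ i, r i * a i j) = 0

variable (R : Type) [Ring R]

/-- `Ext^n_R(M, N) = 0`. -/
def extVanish (n : ℕ) (M N : ModuleCat.{0} R) : Prop :=
  Subsingleton (((Ext ℤ (ModuleCat.{0} R) n).obj (Opposite.op M)).obj N)

/-- `M` has flat dimension at most `n`. -/
def fdLE : ℕ → ModuleCat.{0} R → Prop
  | 0, M => IsFlatMod R M
  | n+1, M => ∃ (K F : ModuleCat.{0} R) (f : K ⟶ F) (g : F ⟶ M),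
      IsFlatMod R F ∧ Function.Injective f ∧ Function.Surjective g ∧
        Function.Exact f g ∧ fdLE n K

/-- `W` is `L_n`-injective: `Ext^1_R(M, W) = 0` for every `M` of flat dimension at most `n`. -/
def LnInj (n : ℕ) (W : ModuleCat.{0} R) : Prop :=
  ∀ M : ModuleCat.{0} R, fdLE R n M → extVanish R 1 M W

/-! ### Flat modules -/

variable {R}

lemma IsFlatMod.exists_of_system {M : Type} [AddCommGroup M] [Module R M] (hM : IsFlatMod R M)
    {ι κ : Type} [Fintype κ] (s : Finset ι) (a : Matrix ι κ R) (x : κ → M)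
    (h : ∀ i ∈ s, ∑ j, a i j • x j = 0) :
    ∃ (l : Type) (_ : Fintype l) (b : Matrix κ l R) (y : l → M),
      (∀ j, x j = ∑ p, b j p • y p) ∧ ∀ i ∈ s, ∀ p, (a * b) i p = 0 := by
  classical
  induction s using Finset.induction_on with
  | empty => exact ⟨κ, inferInstance, 1, x, fun j ↦ by simp [Matrix.one_apply], by simp⟩
  | insert i s _ ih =>
    obtain ⟨l, _, b, y, hx, hab⟩ := ih fun i' hi' ↦ h i' (Finset.mem_insert_of_mem hi')
    have hy : ∑ p, (a * b) i p • y p = 0 := by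
      rw [← h i (Finset.mem_insert_self i s)]
      simp only [Matrix.mul_apply, Finset.sum_smul, hx, Finset.smul_sum, smul_smul]
      exact Finset.sum_comm
    obtain ⟨q, _, c, z, hyz, hc⟩ := hM l inferInstance _ y hy
    refine ⟨q, inferInstance, b * Matrix.of c, z, fun j ↦ ?_, fun i' hi' p ↦ ?_⟩
    · simp only [hx j, Matrix.mul_apply, Finset.sum_smul, Matrix.of_apply, hyz, Finset.smul_sum,
        smul_smul]
      exact Finset.sum_comm
    · rw [← Matrix.mul_assoc, Matrix.mul_apply]
      obtain rfl | hi' := Finset.mem_insert.1 hi'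
      · exact hc p
      · exact Finset.sum_eq_zero fun j _ ↦ by rw [hab i' hi', zero_mul]

lemma isFlatMod_of_free (M : Type) [AddCommGroup M] [Module R M] [Module.Free R M] :
    IsFlatMod R M := by
  classical
  intro ι _ r x hrx
  let e := Module.Free.chooseBasis R M
  let s : Finset (Module.Free.ChooseBasisIndex R M) :=
    Finset.univ.biUnion fun i ↦ (e.repr (x i)).support
  refine ⟨s, inferInstance, fun i j ↦ e.repr (x i) j.1, fun j ↦ e j.1, fun i ↦ ?_, fun j ↦ ?_⟩
  · rw [s.sum_coe_sort fun j ↦ e.repr (x i) j • e j]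
    conv_lhs => rw [← e.linearCombination_repr (x i), Finsupp.linearCombination_apply]
    exact Finsupp.sum_of_support_subset _
      (Finset.subset_biUnion_of_mem (fun i ↦ (e.repr (x i)).support) (Finset.mem_univ i)) _
      (by simp)
  · simpa [Finsupp.finsetSum_apply] using DFunLike.congr_fun (congr_arg e.repr hrx) j.1

lemma isFlatMod_of_subsingleton (M : Type) [AddCommGroup M] [Module R M] [Subsingleton M] :
    IsFlatMod R M :=
  fun _ _ _ _ _ ↦ ⟨Empty, inferInstance, fun _ ↦ Empty.elim, Empty.elim,
    fun _ ↦ Subsingleton.elim _ _, fun j ↦ j.elim⟩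

section Exact

variable {K X M : Type} [AddCommGroup K] [Module R K] [AddCommGroup X] [Module R X]
  [AddCommGroup M] [Module R M] {f : K →ₗ[R] X} {g : X →ₗ[R] M}

lemma IsFlatMod.of_exact (hX : IsFlatMod R X) (hM : IsFlatMod R M)
    (hf : Function.Injective f) (hg : Function.Surjective g) (hfg : Function.Exact f g) :
    IsFlatMod R K := by
  intro ι _ r x hrx
  obtain ⟨κ, _, a, q, hxq, hra⟩ := hX ι inferInstance r (fun i ↦ f (x i)) (by
    simpa using congr_arg f hrx)
  obtain ⟨l, _, b, y, hqy, hab⟩ := hM.exists_of_system Finset.univ (Matrix.of a) (fun j ↦ g (q j))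
    fun i _ ↦ by
      simpa using (congr_arg g (hxq i)).symm.trans (hfg.apply_apply_eq_zero (x i))
  choose z hz using fun p ↦ hg (y p)
  have hk (j : κ) : ∃ k, f k = q j - ∑ p, b j p • z p := by
    refine (hfg _).1 ?_
    simp [hz, hqy j]
  choose k hk using hk
  refine ⟨κ, inferInstance, a, k, fun i ↦ hf ?_, hra⟩
  have hzero : ∑ j, a i j • ∑ p, b j p • z p = 0 := by
    simp only [Finset.smul_sum, smul_smul]
    rw [Finset.sum_comm]
    refine Finset.sum_eq_zero fun p _ ↦ ?_
    rw [← Finset.sum_smul]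
    have := hab i (Finset.mem_univ i) p
    rw [Matrix.mul_apply] at this
    exact (congr_arg (· • z p) this).trans (zero_smul R _)
  simp only [map_sum, map_smul, hk, smul_sub, Finset.sum_sub_distrib, hzero, sub_zero]
  exact hxq i

lemma IsFlatMod.exists_eq_sum_smul (hM : IsFlatMod R M) (hf : Function.Injective f)
    (hg : Function.Surjective g) (hfg : Function.Exact f g) {ι : Type} [Fintype ι] (r : ι → R)
    (p : ι → X) (k : K) (hk : f k = ∑ i, r i • p i) : ∃ k' : ι → K, k = ∑ i, r i • k' i := by
  obtain ⟨κ, _, a, y, hpy, hra⟩ := hM ι inferInstance r (fun i ↦ g (p i)) (by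
    simpa [hfg.apply_apply_eq_zero] using (congr_arg g hk).symm)
  choose q hq using fun j ↦ hg (y j)
  have hk' (i : ι) : ∃ k', f k' = p i - ∑ j, a i j • q j := by
    refine (hfg _).1 ?_
    simp [hq, hpy i]
  choose k' hk' using hk'
  refine ⟨k', hf ?_⟩
  have hzero : ∑ i, r i • ∑ j, a i j • q j = 0 := by
    simp only [Finset.smul_sum, smul_smul]
    rw [Finset.sum_comm]
    exact Finset.sum_eq_zero fun j _ ↦ by rw [← Finset.sum_smul, hra, zero_smul]
  simp [hk', smul_sub, Finset.sum_sub_distrib, hzero, hk]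

lemma isFlatMod_of_exists_eq_sum_smul (hX : IsFlatMod R X) (hg : Function.Surjective g)
    (hfg : Function.Exact f g)
    (h : ∀ (ι : Type) [Fintype ι] (r : ι → R) (p : ι → X) (k : K), f k = ∑ i, r i • p i →
      ∃ k' : ι → K, k = ∑ i, r i • k' i) : IsFlatMod R M := by
  intro ι _ r x hrx
  choose p hp using fun i ↦ hg (x i)
  obtain ⟨k, hk⟩ := (hfg (∑ i, r i • p i)).1 (by simp [hp, hrx])
  obtain ⟨k', rfl⟩ := h ι r p k hk
  obtain ⟨κ, _, a, y, hpy, hra⟩ := hX ι inferInstance r (fun i ↦ p i - f (k' i)) (by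
    simp [smul_sub, Finset.sum_sub_distrib, ← hk])
  refine ⟨κ, inferInstance, a, fun j ↦ g (y j), fun i ↦ ?_, hra⟩
  simpa [hp, hfg.apply_apply_eq_zero] using congr_arg g (hpy i)

end Exact

/-! ### Duals of cyclic right modules -/

/-- The character module of the right module `R ⧸ ∑ i, r i R`. -/
def cyclicDual {ι : Type} (r : ι → R) : AddSubgroup (R →+ AddCircle (1 : ℚ)) where
  carrier := {φ | ∀ i t, φ (r i * t) = 0}
  add_mem' hφ hψ i t := by simp [hφ i t, hψ i t]
  zero_mem' _ _ := rfl
  neg_mem' hφ i t := by simp [hφ i t]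

namespace cyclicDual

variable {ι : Type} {r : ι → R}

instance : SMul R (cyclicDual r) where
  smul s φ := ⟨φ.1.comp (AddMonoidHom.mulRight s), fun i t ↦ by
    simpa [mul_assoc] using φ.2 i (t * s)⟩

lemma smul_apply (s t : R) (φ : cyclicDual r) : (s • φ).1 t = φ.1 (t * s) := rfl

lemma ext {φ ψ : cyclicDual r} (h : ∀ t, φ.1 t = ψ.1 t) : φ = ψ :=
  Subtype.ext (AddMonoidHom.ext h)

instance : Module R (cyclicDual r) where
  one_smul φ := ext fun t ↦ by simp [smul_apply]
  mul_smul s s' φ := ext fun t ↦ by simp [smul_apply, mul_assoc]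
  smul_zero s := ext fun t ↦ by simp [smul_apply]
  smul_add s φ ψ := ext fun t ↦ by simp [smul_apply]
  add_smul s s' φ := ext fun t ↦ by simp [smul_apply, mul_add]
  zero_smul φ := ext fun t ↦ by simp [smul_apply]

variable {M : Type} [AddCommGroup M] [Module R M]

/-- The linear map into `cyclicDual r` induced by a character killing all `r i • m`. -/
def lift (χ : M →+ AddCircle (1 : ℚ)) (hχ : ∀ i m, χ (r i • m) = 0) : M →ₗ[R] cyclicDual r where
  toFun m := ⟨χ.comp ((smulAddHom R M).flip m), fun i t ↦ by
    simpa [mul_smul] using hχ i (t • m)⟩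
  map_add' m m' := ext fun t ↦ by simp
  map_smul' s m := ext fun t ↦ by simp [smul_apply, mul_smul]

@[simp]
lemma lift_apply (χ : M →+ AddCircle (1 : ℚ)) (hχ : ∀ i m, χ (r i • m) = 0) (m : M) (t : R) :
    (lift χ hχ m).1 t = χ (t • m) := rfl

lemma linearMap_apply_smul_apply (h : M →ₗ[R] cyclicDual r) (s t : R) (m : M) :
    (h (s • m)).1 t = (h m).1 (t * s) := by
  rw [map_smul, smul_apply]

lemma linearMap_apply_smul_apply_one (h : M →ₗ[R] cyclicDual r) (i : ι) (m : M) :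
    (h (r i • m)).1 1 = 0 := by
  rw [linearMap_apply_smul_apply, one_mul]
  simpa using (h m).2 i 1

end cyclicDual

/-- The additive map `k ↦ ∑ i, r i • k i`. -/
def sumSMulHom {ι : Type} [Fintype ι] (r : ι → R) (M : Type) [AddCommGroup M] [Module R M] :
    (ι → M) →+ M where
  toFun k := ∑ i, r i • k i
  map_zero' := by simp
  map_add' k k' := by simp [Finset.sum_add_distrib]

lemma sumSMulHom_apply {ι : Type} [Fintype ι] (r : ι → R) {M : Type} [AddCommGroup M] [Module R M]
    (k : ι → M) : sumSMulHom r M k = ∑ i, r i • k i := rfl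

lemma smul_mem_range_sumSMulHom {ι : Type} [Fintype ι] (r : ι → R) {M : Type} [AddCommGroup M]
    [Module R M] (i : ι) (m : M) : r i • m ∈ (sumSMulHom r M).range := by
  classical
  refine ⟨Pi.single i m, ?_⟩
  rw [sumSMulHom_apply, Finset.sum_eq_single i] <;> simp +contextual

section Exact

variable {K X M : Type} [AddCommGroup K] [Module R K] [AddCommGroup X] [Module R X]
  [AddCommGroup M] [Module R M] {f : K →ₗ[R] X} {g : X →ₗ[R] M}

lemma IsFlatMod.exists_cyclicDual_extension (hM : IsFlatMod R M) (hf : Function.Injective f)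
    (hg : Function.Surjective g) (hfg : Function.Exact f g) {ι : Type} [Fintype ι] {r : ι → R}
    (h : K →ₗ[R] cyclicDual r) : ∃ h' : X →ₗ[R] cyclicDual r, h' ∘ₗ f = h := by
  let χ : K →+ AddCircle (1 : ℚ) :=
    { toFun k := (h k).1 1
      map_zero' := by simp
      map_add' := by simp }
  let q : K ⧸ (sumSMulHom r K).range →+ X ⧸ (sumSMulHom r X).range :=
    QuotientAddGroup.map _ _ f.toAddMonoidHom (by
      rintro _ ⟨k, rfl⟩
      exact ⟨fun i ↦ f (k i), by simp [sumSMulHom_apply]⟩)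
  have hq : Function.Injective q := by
    refine (injective_iff_map_eq_zero q).2 fun k hk ↦ ?_
    obtain ⟨k, rfl⟩ := QuotientAddGroup.mk_surjective k
    obtain ⟨p, hp⟩ := (QuotientAddGroup.eq_zero_iff _).1 hk
    obtain ⟨k', hk'⟩ := hM.exists_eq_sum_smul hf hg hfg r p k hp.symm
    exact (QuotientAddGroup.eq_zero_iff _).2 ⟨k', hk'.symm⟩
  obtain ⟨ψ, hψ⟩ := CharacterModule.dual_surjective_of_injective q.toIntLinearMap hq
    (QuotientAddGroup.lift _ χ (by
      rintro _ ⟨k, rfl⟩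
      rw [AddMonoidHom.mem_ker, sumSMulHom_apply, map_sum]
      exact Finset.sum_eq_zero fun i _ ↦ cyclicDual.linearMap_apply_smul_apply_one h i (k i)))
  let χ' : X →+ AddCircle (1 : ℚ) := AddMonoidHom.comp ψ (QuotientAddGroup.mk' _)
  have hχ' (k : K) : χ' (f k) = (h k).1 1 :=
    DFunLike.congr_fun hψ (k : K ⧸ (sumSMulHom r K).range)
  refine ⟨cyclicDual.lift χ' fun i x ↦ ?_, LinearMap.ext fun k ↦ cyclicDual.ext fun t ↦ ?_⟩
  · have : QuotientAddGroup.mk' (sumSMulHom r X).range (r i • x) = 0 :=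
      (QuotientAddGroup.eq_zero_iff _).2 (smul_mem_range_sumSMulHom r i x)
    exact (congr_arg ψ this).trans (map_zero ψ)
  · rw [LinearMap.comp_apply, cyclicDual.lift_apply, ← map_smul, hχ',
      cyclicDual.linearMap_apply_smul_apply, one_mul]

lemma exists_eq_sum_smul_of_cyclicDual_extension {ι : Type} [Fintype ι] {r : ι → R}
    (h : ∀ φ : K →ₗ[R] cyclicDual r, ∃ φ' : X →ₗ[R] cyclicDual r, φ' ∘ₗ f = φ)
    (p : ι → X) (k : K) (hk : f k = ∑ i, r i • p i) : ∃ k' : ι → K, k = ∑ i, r i • k' i := by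
  suffices hmem : (k : K ⧸ (sumSMulHom r K).range) = 0 by
    obtain ⟨k', hk'⟩ := (QuotientAddGroup.eq_zero_iff _).1 hmem
    exact ⟨k', hk'.symm⟩
  refine CharacterModule.eq_zero_of_character_apply fun c ↦ ?_
  obtain ⟨h', hh'⟩ := h (cyclicDual.lift (AddMonoidHom.comp c (QuotientAddGroup.mk' _))
    fun i x ↦ by
      have : QuotientAddGroup.mk' (sumSMulHom r K).range (r i • x) = 0 :=
        (QuotientAddGroup.eq_zero_iff _).2 (smul_mem_range_sumSMulHom r i x)
      exact (congr_arg c this).trans (map_zero c))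
  have := congr_arg (fun φ ↦ φ.1 1) (LinearMap.congr_fun hh' k)
  simp only [LinearMap.comp_apply, hk, cyclicDual.lift_apply, one_smul] at this
  refine Eq.trans this.symm ?_
  simp only [map_sum, AddSubgroup.val_finsetSum, AddMonoidHom.finsetSum_apply]
  exact Finset.sum_eq_zero fun i _ ↦ cyclicDual.linearMap_apply_smul_apply_one h' i (p i)

end Exact

/-! ### Vanishing of `Ext` -/

lemma extVanish_one_iff (M W : ModuleCat.{0} R) :
    extVanish R 1 M W ↔ Subsingleton (Abelian.Ext M W 1) := by
  let P := projectiveResolution M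
  have key : extVanish R 1 M W ↔ ∀ φ : P.complex.X 1 ⟶ W, P.complex.d 2 1 ≫ φ = 0 →
      ∃ ψ : P.complex.X 0 ⟶ W, P.complex.d 1 0 ≫ ψ = φ := by
    rw [extVanish, ← ModuleCat.isZero_iff_subsingleton, (P.isoExt 1 W).isZero_iff,
      ← HomologicalComplex.exactAt_iff_isZero_homology,
      HomologicalComplex.exactAt_iff' _ 0 1 2 (by simp) (by simp),
      ShortComplex.moduleCat_exact_iff]
    rfl
  rw [key]
  constructor
  · refine fun h ↦ subsingleton_of_forall_eq 0 fun x ↦ ?_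
    obtain ⟨φ, hφ, rfl⟩ := P.extMk_surjective x 2 rfl
    exact (P.extMk_eq_zero_iff φ 2 rfl hφ 0 rfl).2 (h φ hφ)
  · exact fun _ φ hφ ↦ (P.extMk_eq_zero_iff φ 2 rfl hφ 0 rfl).1 (Subsingleton.elim _ _)

section DimensionShifting

variable {C : Type*} [Category* C] [Abelian C] [HasExt C] {S : ShortComplex C}

lemma CategoryTheory.ShortComplex.ShortExact.subsingleton_ext_one (hS : S.ShortExact) {W : C}
    [Subsingleton (Abelian.Ext S.X₂ W 1)]
    (h : ∀ φ : S.X₁ ⟶ W, ∃ ψ : S.X₂ ⟶ W, S.f ≫ ψ = φ) : Subsingleton (Abelian.Ext S.X₃ W 1) := by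
  refine subsingleton_of_forall_eq 0 fun x ↦ ?_
  obtain ⟨y, rfl⟩ := Abelian.Ext.contravariant_sequence_exact₃ hS W x (Subsingleton.elim _ _)
    (n₀ := 0) rfl
  obtain ⟨φ, rfl⟩ := Abelian.Ext.homEquiv₀.symm.surjective y
  obtain ⟨ψ, rfl⟩ := h φ
  simp [← Abelian.Ext.mk₀_comp_mk₀]

lemma CategoryTheory.ShortComplex.ShortExact.exists_extension (hS : S.ShortExact) {W : C}
    [Subsingleton (Abelian.Ext S.X₃ W 1)] (φ : S.X₁ ⟶ W) : ∃ ψ : S.X₂ ⟶ W, S.f ≫ ψ = φ := by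
  obtain ⟨y, hy⟩ := Abelian.Ext.contravariant_sequence_exact₁ hS W (Abelian.Ext.mk₀ φ)
    (n₁ := 1) rfl (Subsingleton.elim _ _)
  obtain ⟨ψ, rfl⟩ := Abelian.Ext.homEquiv₀.symm.surjective y
  exact ⟨ψ, (Abelian.Ext.mk₀_bijective _ _).injective (by simpa using hy)⟩

lemma CategoryTheory.ShortComplex.ShortExact.subsingleton_ext_X₃_succ (hS : S.ShortExact) (W : C)
    (n : ℕ) [Subsingleton (Abelian.Ext S.X₁ W n)] [Subsingleton (Abelian.Ext S.X₂ W (n + 1))] :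
    Subsingleton (Abelian.Ext S.X₃ W (n + 1)) := by
  refine subsingleton_of_forall_eq 0 fun x ↦ ?_
  obtain ⟨y, rfl⟩ := Abelian.Ext.contravariant_sequence_exact₃ hS W x (Subsingleton.elim _ _)
    (Nat.add_comm 1 n)
  rw [Subsingleton.elim y 0, Abelian.Ext.comp_zero]

lemma CategoryTheory.ShortComplex.ShortExact.subsingleton_ext_X₁ (hS : S.ShortExact) (W : C)
    (n : ℕ) [Subsingleton (Abelian.Ext S.X₂ W n)] [Subsingleton (Abelian.Ext S.X₃ W (n + 1))] :
    Subsingleton (Abelian.Ext S.X₁ W n) := by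
  refine subsingleton_of_forall_eq 0 fun x ↦ ?_
  obtain ⟨y, rfl⟩ := Abelian.Ext.contravariant_sequence_exact₁ hS W x
    (Nat.add_comm 1 n) (Subsingleton.elim _ _)
  rw [Subsingleton.elim y 0, Abelian.Ext.comp_zero]

lemma CategoryTheory.ShortComplex.ShortExact.subsingleton_ext_to_X₁_succ (hS : S.ShortExact)
    (X : C) (n : ℕ) [Subsingleton (Abelian.Ext X S.X₃ n)]
    [Subsingleton (Abelian.Ext X S.X₂ (n + 1))] : Subsingleton (Abelian.Ext X S.X₁ (n + 1)) := by
  refine subsingleton_of_forall_eq 0 fun x ↦ ?_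
  obtain ⟨y, rfl⟩ := Abelian.Ext.covariant_sequence_exact₁ X hS x (Subsingleton.elim _ _)
    (n₀ := n) rfl
  rw [Subsingleton.elim y 0, Abelian.Ext.zero_comp]

lemma CategoryTheory.ShortComplex.ShortExact.subsingleton_ext_to_X₃ (hS : S.ShortExact)
    (X : C) (n : ℕ) [Subsingleton (Abelian.Ext X S.X₂ n)]
    [Subsingleton (Abelian.Ext X S.X₁ (n + 1))] : Subsingleton (Abelian.Ext X S.X₃ n) := by
  refine subsingleton_of_forall_eq 0 fun x ↦ ?_
  obtain ⟨y, rfl⟩ := Abelian.Ext.covariant_sequence_exact₃ X hS x rfl (Subsingleton.elim _ _)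
  rw [Subsingleton.elim y 0, Abelian.Ext.zero_comp]

end DimensionShifting

/-! ### Modules of bounded flat dimension -/

lemma shortExact_of_function_exact {K F M : ModuleCat.{0} R} {f : K ⟶ F} {g : F ⟶ M}
    (hf : Function.Injective f) (hg : Function.Surjective g) (hfg : Function.Exact f g) :
    (ShortComplex.mk f g (by ext x; exact hfg.apply_apply_eq_zero x)).ShortExact where
  exact := (ShortComplex.ShortExact.moduleCat_exact_iff_function_exact _).2 hfg
  mono_f := (ModuleCat.mono_iff_injective _).2 hf
  epi_g := (ModuleCat.epi_iff_surjective _).2 hg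

lemma fdLE_succ_iff {n : ℕ} {M : ModuleCat.{0} R} :
    fdLE R (n + 1) M ↔ ∃ S : ShortComplex (ModuleCat.{0} R), S.ShortExact ∧ S.X₃ = M ∧
      fdLE R 0 S.X₂ ∧ fdLE R n S.X₁ := by
  constructor
  · rintro ⟨K, F, f, g, hF, hf, hg, hfg, hK⟩
    exact ⟨_, shortExact_of_function_exact hf hg hfg, rfl, hF, hK⟩
  · rintro ⟨S, hS, rfl, hF, hK⟩
    exact ⟨S.X₁, S.X₂, S.f, S.g, hF, hS.moduleCat_injective_f, hS.moduleCat_surjective_g,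
      (ShortComplex.ShortExact.moduleCat_exact_iff_function_exact _).1 hS.exact, hK⟩

lemma fdLE_zero_of_shortExact {S : ShortComplex (ModuleCat.{0} R)} (hS : S.ShortExact)
    (h₂ : fdLE R 0 S.X₂) (h₃ : fdLE R 0 S.X₃) : fdLE R 0 S.X₁ :=
  IsFlatMod.of_exact (f := S.f.hom) (g := S.g.hom) h₂ h₃ hS.moduleCat_injective_f
    hS.moduleCat_surjective_g
    ((ShortComplex.ShortExact.moduleCat_exact_iff_function_exact _).1 hS.exact)

lemma fdLE.succ {n : ℕ} {M : ModuleCat.{0} R} (h : fdLE R n M) : fdLE R (n + 1) M := by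
  induction n generalizing M with
  | zero =>
    refine ⟨ModuleCat.of R PUnit, M, 0, 𝟙 M, h, fun _ _ _ ↦ rfl, fun x ↦ ⟨x, rfl⟩, fun x ↦ ?_,
      isFlatMod_of_subsingleton PUnit⟩
    exact ⟨fun hx ↦ ⟨PUnit.unit, hx.symm⟩, fun ⟨_, hy⟩ ↦ hy.symm⟩
  | succ n ih =>
    obtain ⟨S, hS, rfl, hF, hK⟩ := fdLE_succ_iff.1 h
    exact fdLE_succ_iff.2 ⟨S, hS, rfl, hF, ih hK⟩

lemma fdLE.mono {n m : ℕ} (hnm : n ≤ m) {M : ModuleCat.{0} R} (h : fdLE R n M) : fdLE R m M :=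
  Nat.le_induction h (fun _ _ ↦ fdLE.succ) m hnm

lemma fdLE_of_forall_fdLE_succ {n : ℕ} (h : ∀ M : ModuleCat.{0} R, fdLE R (n + 1) M → fdLE R n M)
    {k : ℕ} {M : ModuleCat.{0} R} (hM : fdLE R k M) : fdLE R n M := by
  induction k generalizing M with
  | zero => exact hM.mono n.zero_le
  | succ k ih =>
    obtain ⟨S, hS, rfl, hF, hK⟩ := fdLE_succ_iff.1 hM
    exact h _ (fdLE_succ_iff.2 ⟨S, hS, rfl, hF, ih hK⟩)

lemma fdLE_zero_projectiveShortComplex_X₂ (M : ModuleCat.{0} R) :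
    fdLE R 0 M.projectiveShortComplex.X₂ :=
  isFlatMod_of_free _

instance projective_projectiveShortComplex_X₂ (M : ModuleCat.{0} R) :
    Projective M.projectiveShortComplex.X₂ :=
  ModuleCat.projective_of_free (Module.Free.chooseBasis R M.projectiveShortComplex.X₂)

lemma subsingleton_ext_cyclicDual {F : ModuleCat.{0} R} (hF : fdLE R 0 F) {ι : Type} [Fintype ι]
    (r : ι → R) : Subsingleton (Abelian.Ext F (ModuleCat.of R (cyclicDual r)) 1) := by
  have hS := F.shortExact_projectiveShortComplex
  have : Subsingleton (Abelian.Ext F.projectiveShortComplex.X₂ (ModuleCat.of R (cyclicDual r)) 1) :=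
    Abelian.Ext.subsingleton_of_projective _ _ 0
  refine hS.subsingleton_ext_one fun φ ↦ ?_
  obtain ⟨ψ, hψ⟩ := IsFlatMod.exists_cyclicDual_extension
    (f := F.projectiveShortComplex.f.hom) (g := F.projectiveShortComplex.g.hom) hF
    hS.moduleCat_injective_f hS.moduleCat_surjective_g
    ((ShortComplex.ShortExact.moduleCat_exact_iff_function_exact _).1 hS.exact) φ.hom
  exact ⟨ModuleCat.ofHom ψ, ModuleCat.hom_ext hψ⟩

lemma fdLE_zero_of_subsingleton_ext_cyclicDual {M : ModuleCat.{0} R}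
    (h : ∀ (ι : Type) [Fintype ι] (r : ι → R),
      Subsingleton (Abelian.Ext M (ModuleCat.of R (cyclicDual r)) 1)) : fdLE R 0 M := by
  have hS := M.shortExact_projectiveShortComplex
  refine isFlatMod_of_exists_eq_sum_smul
    (f := M.projectiveShortComplex.f.hom) (g := M.projectiveShortComplex.g.hom)
    (fdLE_zero_projectiveShortComplex_X₂ M) hS.moduleCat_surjective_g
    ((ShortComplex.ShortExact.moduleCat_exact_iff_function_exact _).1 hS.exact)
    fun ι _ r ↦ exists_eq_sum_smul_of_cyclicDual_extension fun φ ↦ ?_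
  have := h ι r
  obtain ⟨ψ, hψ⟩ := hS.exists_extension (W := ModuleCat.of R (cyclicDual r)) (ModuleCat.ofHom φ)
  exact ⟨ψ.hom, congr_arg ModuleCat.Hom.hom hψ⟩

lemma LnInj.subsingleton_ext {n : ℕ} {W M : ModuleCat.{0} R} (hW : LnInj R n W)
    (hM : fdLE R n M) : Subsingleton (Abelian.Ext M W 1) :=
  (extVanish_one_iff M W).1 (hW M hM)

/-- The cokernel of an embedding of an `L_n`-injective module into an injective module is
`L_{n+1}`-injective. -/
lemma LnInj.cosyzygy {n : ℕ} {S : ShortComplex (ModuleCat.{0} R)} (hS : S.ShortExact)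
    [Injective S.X₂] (h : LnInj R n S.X₁) : LnInj R (n + 1) S.X₃ := by
  intro X hX
  rw [extVanish_one_iff]
  obtain ⟨T, hT, rfl, hF, hK⟩ := fdLE_succ_iff.1 hX
  have hP := T.X₂.shortExact_projectiveShortComplex
  have : Subsingleton (Abelian.Ext T.X₂.projectiveShortComplex.X₁ S.X₁ 1) :=
    h.subsingleton_ext ((fdLE_zero_of_shortExact hP
      (fdLE_zero_projectiveShortComplex_X₂ _) hF).mono n.zero_le)
  have : Subsingleton (Abelian.Ext T.X₂.projectiveShortComplex.X₂ S.X₁ (1 + 1)) :=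
    Abelian.Ext.subsingleton_of_projective _ _ 1
  have : Subsingleton (Abelian.Ext T.X₂ S.X₁ (1 + 1)) := hP.subsingleton_ext_X₃_succ _ 1
  have : Subsingleton (Abelian.Ext T.X₁ S.X₁ 1) := h.subsingleton_ext hK
  have : Subsingleton (Abelian.Ext T.X₃ S.X₁ (1 + 1)) := hT.subsingleton_ext_X₃_succ _ 1
  have : Subsingleton (Abelian.Ext T.X₃ S.X₂ 1) := Abelian.Ext.subsingleton_of_injective _ _ 0
  exact hS.subsingleton_ext_to_X₃ _ 1

/-- A module that is `Ext`-orthogonal to all `L_n`-injective modules has flat dimension at most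
`n`. -/
lemma fdLE_of_forall_LnInj {n : ℕ} {M : ModuleCat.{0} R}
    (h : ∀ W : ModuleCat.{0} R, LnInj R n W → extVanish R 1 M W) : fdLE R n M := by
  induction n generalizing M with
  | zero =>
    exact fdLE_zero_of_subsingleton_ext_cyclicDual fun ι _ r ↦ (extVanish_one_iff _ _).1 <|
      h _ fun F hF ↦ (extVanish_one_iff _ _).2 (subsingleton_ext_cyclicDual hF r)
  | succ n ih =>
    have hP := M.shortExact_projectiveShortComplex
    refine fdLE_succ_iff.2 ⟨_, hP, rfl, fdLE_zero_projectiveShortComplex_X₂ M,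
      ih fun W hW ↦ (extVanish_one_iff _ _).2 ?_⟩
    let S : ShortComplex (ModuleCat.{0} R) := ShortComplex.mk (Injective.ι W)
      (Limits.cokernel.π (Injective.ι W)) (Limits.cokernel.condition _)
    have hS : S.ShortExact := { exact := ShortComplex.exact_cokernel _ }
    have : Injective S.X₂ := inferInstanceAs (Injective (Injective.under W))
    have : Subsingleton (Abelian.Ext M S.X₃ 1) :=
      (extVanish_one_iff _ _).1 (h _ (LnInj.cosyzygy hS hW))
    have : Subsingleton (Abelian.Ext M S.X₂ (1 + 1)) :=
      Abelian.Ext.subsingleton_of_injective _ _ 1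
    have : Subsingleton (Abelian.Ext M.projectiveShortComplex.X₂ S.X₁ 1) :=
      Abelian.Ext.subsingleton_of_projective _ _ 0
    have : Subsingleton (Abelian.Ext M.projectiveShortComplex.X₃ S.X₁ (1 + 1)) :=
      hS.subsingleton_ext_to_X₁_succ M 1
    exact hP.subsingleton_ext_X₁ S.X₁ 1

variable (R)

/-- For `n < m`: if every `L_n`-injective module is `L_m`-injective then `l.FFD(R) ≤ n`;
conversely, if `l.FFD(R) ≤ n` then the classes of `L_n`-injective and `L_m`-injective
modules coincide. -/
theorem stmt11 (n m : ℕ) (hnm : n < m) :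
    ((∀ W : ModuleCat.{0} R, LnInj R n W → LnInj R m W) →
      ∀ M : ModuleCat.{0} R, (∃ k, fdLE R k M) → fdLE R n M) ∧
    ((∀ M : ModuleCat.{0} R, (∃ k, fdLE R k M) → fdLE R n M) →
      ∀ W : ModuleCat.{0} R, (LnInj R n W ↔ LnInj R m W)) := by
  refine ⟨fun h M ⟨k, hM⟩ ↦ fdLE_of_forall_fdLE_succ (fun X hX ↦ ?_) hM,
    fun h W ↦ ⟨fun hW M hM ↦ hW M (h M ⟨m, hM⟩), fun hW M hM ↦ hW M (hM.mono hnm.le)⟩⟩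
  exact fdLE_of_forall_LnInj fun W hW ↦ h W hW X (hX.mono hnm)
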